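/- Let C be an unbounded polynomial class. Let W ∈ C_n be a word with k dominant loop blocks in its prefix decomposition, and suppose that all these loop blocks are large. Let Ŵ ∈ C be a word that contains W. Then Ŵ has at least k dominant loop blocks in its prefix decomposition. Moreover, if Ŵ has exactly k dominant loop blocks in its prefix decomposition, then in every embedding of W into Ŵ, for any dominant loop block B_i of W, all the central symbols of B_i are mapped to loop symbols of Ŵ. Analogous properties hold for suffix decompositions. -/

import Mathlib

open Filter Asymptotics
open scoped Classical

/-- An embedding order on words over a weighted alphabet. -/
structure EmbeddingOrder (A : Type*) (w : A → ℕ) where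
  le : List A → List A → Prop
  le_refl : ∀ W, le W W
  le_trans : ∀ {U V W}, le U V → le V W → le U W
  le_antisymm : ∀ {V W}, le V W → le W V → V = W
  nil_le : ∀ W, le [] W
  weight_lt : ∀ {W V}, le W V → W ≠ V → (W.map w).sum < (V.map w).sum
  le_iff_factor : ∀ W V, le W V ↔ ∃ Ws : List (List A),
    Ws.length = V.length ∧ Ws.flatten = W ∧ ∀ q ∈ Ws.zip V, le q.1 [q.2]

namespace EmbeddingOrder

variable {A : Type*} {w : A → ℕ} (E : EmbeddingOrder A w) {f : ℕ} (φ : Fin f → List A)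

/-- The weight of a word: the sum of the weights of its letters. -/
def wt (w : A → ℕ) (W : List A) : ℕ := (W.map w).sum

/-- The class `C = A* ∩ Av(φ¹,…,φ^f)` of all words avoiding every forbidden word. -/
def Cset : Set (List A) := {W | ∀ i, ¬ E.le (φ i) W}

/-- The prefix state of `W`: its `i`-th component is the length of the longest prefix
of the forbidden word `φ i` contained in `W`. -/
noncomputable def pstate (W : List A) : Fin f → ℕ := fun i =>
  sSup {p | p ≤ (φ i).length ∧ E.le ((φ i).take p) W}

/-- The suffix state of `W`: its `i`-th component is the length of the longest suffix
of the forbidden word `φ i` contained in `W`. -/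
noncomputable def sstate (W : List A) : Fin f → ℕ := fun i =>
  sSup {p | p ≤ (φ i).length ∧ E.le ((φ i).drop ((φ i).length - p)) W}

/-- A prefix state `p` and a suffix state `s` *overlap* if `p i + s i ≥ ℓ_i` for some
`i` (equivalently, `XY ∉ C` whenever `X` has prefix state `p` and `Y` suffix state `s`);
otherwise they are *compatible*. -/
def POverlap (p s : Fin f → ℕ) : Prop := ∃ i, (φ i).length ≤ p i + s i

/-- The (prefix) loop alphabet of a state `p`: the letters whose appending does not
change the prefix state `p`. -/
def stateLoopP (p : Fin f → ℕ) : Set A :=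
  {a | ∀ X : List A, E.pstate φ X = p → E.pstate φ (X ++ [a]) = p}

/-- The suffix loop alphabet of a state `s`: the letters whose prepending does not
change the suffix state `s`. -/
def stateLoopS (s : Fin f → ℕ) : Set A :=
  {a | ∀ Y : List A, E.sstate φ Y = s → E.sstate φ (a :: Y) = s}

/-- `p'` is a *prefix successor* of `p`: `p' ≠ p` and some letter is a transition
symbol from `p` to `p'`. -/
def PSucc (p p' : Fin f → ℕ) : Prop :=
  p ≠ p' ∧ ∃ b : A, ∀ X : List A, E.pstate φ X = p → E.pstate φ (X ++ [b]) = p'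

/-- `s'` is a *suffix successor* of `s`. -/
def SSucc (s s' : Fin f → ℕ) : Prop :=
  s ≠ s' ∧ ∃ b : A, ∀ Y : List A, E.sstate φ Y = s → E.sstate φ (b :: Y) = s'

/-- Compatible states `p` (prefix) and `s` (suffix) *match* if every prefix successor
of `p` overlaps with `s` and every suffix successor of `s` overlaps with `p`. -/
def Matches (p s : Fin f → ℕ) : Prop :=
  ¬ POverlap φ p s ∧ (∀ p', E.PSucc φ p p' → POverlap φ p' s) ∧
    ∀ s', E.SSucc φ s s' → POverlap φ p s'

/-- `ρ(S)`: the unique positive root of `1 − Σ_{a∈S} x^{weight a}` for a nonempty set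
`S` of letters (realised as a supremum). -/
noncomputable def rhoOf (w : A → ℕ) (S : Set A) : ℝ :=
  sSup {x : ℝ | 0 ≤ x ∧ ∑' a : S, x ^ w (a : A) ≤ 1}

/-- The growth rate of `S*`: the reciprocal `ρ(S)⁻¹` of the positive root of
`1 − Σ_{a∈S} x^{weight a}`. -/
noncomputable def growthOf (w : A → ℕ) (S : Set A) : ℝ := (rhoOf w S)⁻¹

/-- The dominant growth rate `γ` of the class: the largest growth rate of the loop
alphabet of a (reachable) prefix state. -/
noncomputable def gammaC : ℝ :=
  sSup {g : ℝ | ∃ X ∈ E.Cset φ, g = growthOf w (E.stateLoopP φ (E.pstate φ X))}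

/-- The number of dominant loop blocks (equivalently, dominant states) in the prefix
decomposition of `W`. -/
noncomputable def domCountP (W : List A) : ℕ :=
  Set.ncard {p : Fin f → ℕ | (∃ j ≤ W.length, E.pstate φ (W.take j) = p) ∧
    growthOf w (E.stateLoopP φ p) = E.gammaC φ}

/-- The number of dominant loop blocks (equivalently, dominant states) in the suffix
decomposition of `W`. -/
noncomputable def domCountS (W : List A) : ℕ :=
  Set.ncard {s : Fin f → ℕ | (∃ j ≤ W.length, E.sstate φ (W.drop j) = s) ∧
    growthOf w (E.stateLoopS φ s) = E.gammaC φ}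

/-- `D`: the largest number of dominant states appearing on a single prefix transition
path of a word of the class. -/
noncomputable def Dmax : ℕ := sSup {d : ℕ | ∃ W ∈ E.Cset φ, E.domCountP φ W = d}

end EmbeddingOrder

namespace EmbeddingOrder

variable {A : Type*} {w : A → ℕ} (E : EmbeddingOrder A w) {f : ℕ} (φ : Fin f → List A)

/-- The length of the loop block of the prefix state `q` in `W`: the number of
positions of `W` that are loop symbols at state `q`. -/
noncomputable def blockLenP (W : List A) (q : Fin f → ℕ) : ℕ :=
  Set.ncard {i : ℕ | i < W.length ∧ E.pstate φ (W.take i) = q ∧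
    E.pstate φ (W.take (i + 1)) = q}

/-- The length of the loop block of the suffix state `q` in `W`. -/
noncomputable def blockLenS (W : List A) (q : Fin f → ℕ) : ℕ :=
  Set.ncard {i : ℕ | i < W.length ∧ E.sstate φ (W.drop (i + 1)) = q ∧
    E.sstate φ (W.drop i) = q}

/-- Every dominant loop block of the prefix decomposition of `W` is *large*:
it has length at least `2KQ + 1`. -/
def AllDomLargeP (K Q : ℕ) (W : List A) : Prop :=
  ∀ q : Fin f → ℕ, (∃ j ≤ W.length, E.pstate φ (W.take j) = q) →
    growthOf w (E.stateLoopP φ q) = E.gammaC φ → 2 * K * Q + 1 ≤ E.blockLenP φ W q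

/-- Every dominant loop block of the suffix decomposition of `W` is *large*. -/
def AllDomLargeS (K Q : ℕ) (W : List A) : Prop :=
  ∀ q : Fin f → ℕ, (∃ j ≤ W.length, E.sstate φ (W.drop j) = q) →
    growthOf w (E.stateLoopS φ q) = E.gammaC φ → 2 * K * Q + 1 ≤ E.blockLenS φ W q

/-- The number `|P|` of prefix states of words of `C`. -/
noncomputable def Pcard : ℕ :=
  Set.ncard {p : Fin f → ℕ | ∃ X ∈ E.Cset φ, E.pstate φ X = p}

/-- The number `|S|` of suffix states of words of `C`. -/
noncomputable def Scard : ℕ :=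
  Set.ncard {s : Fin f → ℕ | ∃ Y ∈ E.Cset φ, E.sstate φ Y = s}

/-- The constant `Q = 3(|P| + |S|)`. -/
noncomputable def Qconst : ℕ := 3 * (E.Pcard φ + E.Scard φ)

/-- The largest weight `K` of a letter of the alphabet. -/
noncomputable def Kmax (A : Type*) [Fintype A] (w : A → ℕ) : ℕ := Finset.univ.sup w

end EmbeddingOrder

namespace EmbeddingOrder

variable {A : Type*} {w : A → ℕ} (E : EmbeddingOrder A w) {f : ℕ} (φ : Fin f → List A)

/-- Position `q` of `W` is a *central symbol* of its (prefix) loop block: it is a loop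
position, and its loop block contains at least `KQ` letters before it and at least `KQ`
letters after it. -/
def CentralP (KQ : ℕ) (W : List A) (q : ℕ) : Prop :=
  q < W.length ∧ E.pstate φ (W.take (q + 1)) = E.pstate φ (W.take q) ∧
    KQ ≤ Set.ncard {i : ℕ | i < q ∧ E.pstate φ (W.take i) = E.pstate φ (W.take q) ∧
      E.pstate φ (W.take (i + 1)) = E.pstate φ (W.take q)} ∧
    KQ ≤ Set.ncard {i : ℕ | q < i ∧ i < W.length ∧
      E.pstate φ (W.take i) = E.pstate φ (W.take q) ∧
      E.pstate φ (W.take (i + 1)) = E.pstate φ (W.take q)}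

/-- Position `q` of `W` is a *central symbol* of its suffix loop block. -/
def CentralS (KQ : ℕ) (W : List A) (q : ℕ) : Prop :=
  q < W.length ∧ E.sstate φ (W.drop q) = E.sstate φ (W.drop (q + 1)) ∧
    KQ ≤ Set.ncard {i : ℕ | i < q ∧ E.sstate φ (W.drop i) = E.sstate φ (W.drop (q + 1)) ∧
      E.sstate φ (W.drop (i + 1)) = E.sstate φ (W.drop (q + 1))} ∧
    KQ ≤ Set.ncard {i : ℕ | q < i ∧ i < W.length ∧
      E.sstate φ (W.drop i) = E.sstate φ (W.drop (q + 1)) ∧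
      E.sstate φ (W.drop (i + 1)) = E.sstate φ (W.drop (q + 1))}

/-- In an embedding of `W` into `V` witnessed by the factorisation `Ws` of `W`
(`Ws.flatten = W`, `Ws.length = V.length`, `Ws i ≤ [V i]`), the letter of `W` at
position `q` is mapped to the letter of `V` at position `r`. -/
def MapsTo (Ws : List (List A)) (q r : ℕ) : Prop :=
  ((Ws.take r).flatten).length ≤ q ∧ q < ((Ws.take (r + 1)).flatten).length

end EmbeddingOrder

open EmbeddingOrder

/-!
In a polynomial class every loop alphabet is a single letter: two loop symbols would make the
growth rate exceed `1`. As the letter `one` lies below every letter, that single letter is `one`.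
Fix an embedding of `W` into `V`. A reading of `V` has fewer transitions than there are states, and
at most `K` letters of `W` are mapped to each letter of `V`, so any `K * Q` letters of `W` include
one that lands on a loop symbol of `V`; in particular each dominant loop block of `W` contains such
a letter. If two loop symbols of `W` land in the same loop block of `V`, all letters between them
land in that block too, hence equal `one`, and the two symbols lie in the same loop block of `W`.
Thus `V` has at least as many dominant loop blocks as `W`. In case of equality all letters of a loop
block of `W` that land on loop symbols land in a single block of `V`. A central symbol has two such
letters around it, so its image lies between two positions of this block and is a loop symbol.
-/

section Counting

variable {α β γ : Type*} {X : Set α} {g : α → β} {h : α → γ}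

theorem ncard_image_prodMk_of_determines (hgh : ∀ x ∈ X, ∀ y ∈ X, h x = h y → g x = g y) :
    ((fun x ↦ (g x, h x)) '' X).ncard = (h '' X).ncard := by
  have snd_injOn : Set.InjOn Prod.snd ((fun x ↦ (g x, h x)) '' X) := by
    rintro _ ⟨x, hx, rfl⟩ _ ⟨y, hy, rfl⟩ hxy
    exact Prod.ext (hgh x hx y hy hxy) hxy
  rw [← snd_injOn.ncard_image, Set.image_image]

theorem ncard_image_le_of_determines (hX : X.Finite)
    (hgh : ∀ x ∈ X, ∀ y ∈ X, h x = h y → g x = g y) : (g '' X).ncard ≤ (h '' X).ncard := by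
  rw [← ncard_image_prodMk_of_determines hgh]
  simpa only [Set.image_image] using
    Set.ncard_image_le (f := Prod.fst) (hX.image fun x ↦ (g x, h x))

theorem determines_of_ncard_image_le (hX : X.Finite)
    (hgh : ∀ x ∈ X, ∀ y ∈ X, h x = h y → g x = g y) (hle : (h '' X).ncard ≤ (g '' X).ncard)
    {x y : α} (hx : x ∈ X) (hy : y ∈ X) (hxy : g x = g y) : h x = h y := by
  have fst_injOn : Set.InjOn Prod.fst ((fun x ↦ (g x, h x)) '' X) := by
    refine Set.injOn_of_ncard_image_eq ?_ (hX.image _)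
    rw [ncard_image_prodMk_of_determines hgh, Set.image_image]
    exact (ncard_image_le_of_determines hX hgh).antisymm hle
  exact congrArg Prod.snd
    (fst_injOn (Set.mem_image_of_mem _ hx) (Set.mem_image_of_mem _ hy) hxy)

theorem le_sSup_iff_mem_of_isLowerSet {s : Set ℕ} (hs : IsLowerSet s) (hne : s.Nonempty)
    (hbdd : BddAbove s) {k : ℕ} : k ≤ sSup s ↔ k ∈ s :=
  ⟨fun hk ↦ hs hk (Nat.sSup_mem hne hbdd), le_csSup hbdd⟩

end Counting

section StateSequences

variable {S : Type*} {τ : ℕ → S}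

/-- The transition positions among the first `m` steps of a sequence of states. -/
noncomputable def transitions (τ : ℕ → S) (m : ℕ) : Finset ℕ :=
  {i ∈ Finset.range m | τ i ≠ τ (i + 1)}

/-- The states satisfying `D` visited during the first `n` steps of the sequence `σ`; with `D`
the dominance predicate, they correspond to the dominant loop blocks. -/
def dominantStates (D : S → Prop) (σ : ℕ → S) (n : ℕ) : Set S :=
  {p | (∃ j ≤ n, σ j = p) ∧ D p}

/-- Every dominant loop block among the first `n` steps of `σ` has more than `N` letters. -/
def LargeBlocks (D : S → Prop) (σ : ℕ → S) (n N : ℕ) : Prop :=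
  ∀ p ∈ dominantStates D σ n, N < {i | i < n ∧ σ i = p ∧ σ (i + 1) = p}.ncard

theorem finite_dominantStates (D : S → Prop) (σ : ℕ → S) (n : ℕ) :
    (dominantStates D σ n).Finite :=
  ((Set.finite_Iic n).image σ).subset fun _ hp ↦ hp.1

theorem loop_of_mem_Ico (hτ : ∀ s, (τ ⁻¹' {s}).OrdConnected) {i j l : ℕ} (hil : i ≤ l)
    (hlj : l < j) (hij : τ i = τ j) : τ l = τ (l + 1) :=
  have const {t : ℕ} (hit : i ≤ t) (htj : t ≤ j) : τ t = τ i :=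
    (hτ (τ i)).out rfl hij.symm ⟨hit, htj⟩
  (const hil hlj.le).trans (const (Nat.le_succ_of_le hil) hlj).symm

theorem card_transitions_lt_ncard (hτ : ∀ s, (τ ⁻¹' {s}).OrdConnected) {P : Set S}
    (hP : P.Finite) (hmem : ∀ i, τ i ∈ P) (m : ℕ) : (transitions τ m).card < P.ncard := by
  have ne_later {i j : ℕ} (hi : i ∈ transitions τ m) (hij : i < j) : τ i ≠ τ j := fun h ↦
    (Finset.mem_filter.1 hi).2 (loop_of_mem_Ico hτ le_rfl hij h)
  have hinj : Set.InjOn τ (transitions τ m) := by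
    intro i hi j hj hij
    by_contra hne
    rcases Nat.lt_or_gt_of_ne hne with hlt | hlt
    · exact ne_later hi hlt hij
    · exact ne_later hj hlt hij.symm
  have last_notMem : τ m ∉ τ '' transitions τ m := by
    rintro ⟨i, hi, him⟩
    exact ne_later hi (Finset.mem_range.1 (Finset.mem_filter.1 hi).1) him
  have hsub : τ '' transitions τ m ⊂ P :=
    ⟨Set.image_subset_iff.2 fun i _ ↦ hmem i, fun h ↦ last_notMem (h (hmem m))⟩
  rw [← Set.ncard_coe_finset, ← hinj.ncard_image]
  exact Set.ncard_lt_ncard hsub hP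

end StateSequences

namespace EmbeddingOrder

section GrowthRates

variable {A : Type*} {w : A → ℕ} {S : Set A}

theorem growthOf_singleton {a : A} (ha : 0 < w a) : growthOf w {a} = 1 := by
  have hset : {x : ℝ | 0 ≤ x ∧ ∑' b : ({a} : Set A), x ^ w b ≤ 1} = Set.Icc 0 1 := by
    ext x
    rw [Set.mem_ofPred_eq, tsum_singleton a fun b ↦ x ^ w b]
    exact and_congr_right fun hx ↦ pow_le_one_iff_of_nonneg hx ha.ne'
  rw [growthOf, rhoOf, hset, csSup_Icc zero_le_one, inv_one]

theorem lt_one_of_tsum_pow_le_one [Finite S] (hS : S.Nontrivial) {x : ℝ}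
    (hx : ∑' a : S, x ^ w a ≤ 1) : x < 1 := by
  have := Fintype.ofFinite S
  have : Nontrivial S := hS.coe_sort
  by_contra! h
  have card_le : (Fintype.card S : ℝ) ≤ ∑' a : S, x ^ w a := by
    rw [tsum_fintype]
    simpa using Finset.card_nsmul_le_sum Finset.univ (fun a : S ↦ x ^ w a) 1
      fun a _ ↦ one_le_pow₀ h
  have : (1 : ℝ) < Fintype.card S := mod_cast Fintype.one_lt_card
  linarith

theorem tsum_pow_inv_card_le_one [Finite S] [Nonempty S] (hw : ∀ a ∈ S, 0 < w a) :
    ∑' a : S, (Nat.card S : ℝ)⁻¹ ^ w a ≤ 1 := by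
  have := Fintype.ofFinite S
  have hcard : (1 : ℝ) ≤ Nat.card S := mod_cast Nat.card_pos (α := S)
  rw [tsum_fintype]
  calc ∑ a : S, (Nat.card S : ℝ)⁻¹ ^ w a
      ≤ ∑ _a : S, (Nat.card S : ℝ)⁻¹ := Finset.sum_le_sum fun a _ ↦
        pow_le_of_le_one (by positivity) (inv_le_one_of_one_le₀ hcard) (hw a a.2).ne'
    _ = 1 := by
        rw [Finset.sum_const, Finset.card_univ, nsmul_eq_mul, ← Nat.card_eq_fintype_card,
          mul_inv_cancel₀ (by positivity)]

theorem one_lt_growthOf [Finite S] (hw : ∀ a ∈ S, 0 < w a) (hS : S.Nontrivial) :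
    1 < growthOf w S := by
  have := Fintype.ofFinite S
  have : Nonempty S := hS.nonempty.to_subtype
  set R := {x : ℝ | 0 ≤ x ∧ ∑' a : S, x ^ w a ≤ 1} with hR
  have hmem : (Nat.card S : ℝ)⁻¹ ∈ R := ⟨by positivity, tsum_pow_inv_card_le_one hw⟩
  have hbdd : BddAbove R := ⟨1, fun x hx ↦ (lt_one_of_tsum_pow_le_one hS hx.2).le⟩
  have hclosed : IsClosed R := by
    simp only [hR, tsum_fintype]
    exact (isClosed_le continuous_const continuous_id).and
      (isClosed_le (by fun_prop) continuous_const)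
  have hpos : 0 < sSup R :=
    (inv_pos.2 (mod_cast Nat.card_pos (α := S))).trans_le (le_csSup hbdd hmem)
  exact (one_lt_inv₀ hpos).2
    (lt_one_of_tsum_pow_le_one hS (hclosed.csSup_mem ⟨_, hmem⟩ hbdd).2)

end GrowthRates

variable {A : Type*} {w : A → ℕ} (E : EmbeddingOrder A w) {f : ℕ} (φ : Fin f → List A)

section Containment

variable {φ} {U U' V V' : List A}

theorem append_le_append (h : E.le U V) (h' : E.le U' V') : E.le (U ++ U') (V ++ V') := by
  rw [E.le_iff_factor] at h h' ⊢
  obtain ⟨Ws, hlen, rfl, hle⟩ := h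
  obtain ⟨Ws', hlen', rfl, hle'⟩ := h'
  refine ⟨Ws ++ Ws', by simp [hlen, hlen'], List.flatten_append, ?_⟩
  rw [List.zip_append hlen]
  exact fun q hq ↦ (List.mem_append.1 hq).elim (hle q) (hle' q)

theorem exists_append_of_le_append (h : E.le U (V ++ V')) :
    ∃ U₁ U₂, U = U₁ ++ U₂ ∧ E.le U₁ V ∧ E.le U₂ V' := by
  obtain ⟨Ws, hlen, rfl, hle⟩ := (E.le_iff_factor _ _).1 h
  rw [List.length_append] at hlen
  have hlen₁ : (Ws.take V.length).length = V.length := by simp [hlen]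
  have hlen₂ : (Ws.drop V.length).length = V'.length := by simp [hlen]
  rw [← List.take_append_drop V.length Ws, List.zip_append hlen₁] at hle
  refine ⟨(Ws.take V.length).flatten, (Ws.drop V.length).flatten, ?_, ?_, ?_⟩
  · rw [← List.flatten_append, List.take_append_drop]
  · exact (E.le_iff_factor _ _).2
      ⟨_, hlen₁, rfl, fun q hq ↦ hle q (List.mem_append_left _ hq)⟩
  · exact (E.le_iff_factor _ _).2
      ⟨_, hlen₂, rfl, fun q hq ↦ hle q (List.mem_append_right _ hq)⟩

theorem le_of_isInfix (h : U <:+: V) : E.le U V := by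
  obtain ⟨X, Y, rfl⟩ := h
  simpa using E.append_le_append (E.append_le_append (E.nil_le X) (E.le_refl U)) (E.nil_le Y)

theorem weight_pos (E : EmbeddingOrder A w) (a : A) : 0 < w a := by
  simpa using E.weight_lt (E.nil_le [a]) (List.cons_ne_nil a []).symm

theorem wt_mono (h : E.le U V) : wt w U ≤ wt w V := by
  rcases eq_or_ne U V with rfl | hne
  · rfl
  · exact (E.weight_lt h hne).le

theorem length_le_wt (E : EmbeddingOrder A w) (U : List A) : U.length ≤ wt w U := by
  simpa [wt] using List.length_le_sum_of_one_le (U.map w)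
    (List.forall_mem_map.2 fun a _ ↦ E.weight_pos a)

theorem mem_Cset_of_le (hV : V ∈ E.Cset φ) (h : E.le U V) : U ∈ E.Cset φ :=
  fun i hi ↦ hV i (E.le_trans hi h)

end Containment

section PrefixStates

variable {φ} {X Y : List A} {a b : A}

theorem le_pstate_iff {i : Fin f} {k : ℕ} :
    k ≤ E.pstate φ X i ↔ k ≤ (φ i).length ∧ E.le ((φ i).take k) X :=
  le_sSup_iff_mem_of_isLowerSet (s := {k | k ≤ (φ i).length ∧ E.le ((φ i).take k) X})
    (fun _ _ hle hk ↦ ⟨hle.trans hk.1,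
      E.le_trans (E.le_of_isInfix (List.take_prefix_take_left hle).isInfix) hk.2⟩)
    ⟨0, Nat.zero_le _, E.nil_le X⟩ ⟨(φ i).length, fun _ hk ↦ hk.1⟩

theorem finite_range_pstate : (Set.range (E.pstate φ)).Finite := by
  refine (Set.finite_Iic fun i ↦ (φ i).length).subset ?_
  rintro _ ⟨X, rfl⟩ i
  exact (E.le_pstate_iff.1 le_rfl).1

theorem pstate_mono (h : E.le X Y) : E.pstate φ X ≤ E.pstate φ Y := fun _ ↦
  have hX := E.le_pstate_iff.1 le_rfl
  E.le_pstate_iff.2 ⟨hX.1, E.le_trans hX.2 h⟩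

theorem pstate_le_pstate_append (X Y : List A) : E.pstate φ X ≤ E.pstate φ (X ++ Y) :=
  E.pstate_mono (E.le_of_isInfix (List.prefix_append X Y).isInfix)

theorem monotone_pstate_take (U : List A) : Monotone fun i ↦ E.pstate φ (U.take i) :=
  fun _ _ h ↦ E.pstate_mono (E.le_of_isInfix (List.take_prefix_take_left h).isInfix)

theorem pstate_append_mono (h : E.pstate φ X ≤ E.pstate φ Y) (Z : List A) :
    E.pstate φ (X ++ Z) ≤ E.pstate φ (Y ++ Z) := by
  intro i
  obtain ⟨hlen, hle⟩ := E.le_pstate_iff.1 (le_rfl (a := E.pstate φ (X ++ Z) i))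
  obtain ⟨U, T, hUT, hU, hT⟩ := E.exists_append_of_le_append hle
  have hUφ : U <+: φ i := (hUT ▸ List.prefix_append U T).trans (List.take_prefix _ _)
  have hUY : E.le U Y := by
    rw [List.prefix_iff_eq_take.1 hUφ] at hU ⊢
    exact (E.le_pstate_iff.1 ((E.le_pstate_iff.2 ⟨hUφ.length_le, hU⟩).trans (h i))).2
  exact E.le_pstate_iff.2 ⟨hlen, hUT ▸ E.append_le_append hUY hT⟩

theorem mem_stateLoopP_of_pstate_eq (h : E.pstate φ (X ++ [a]) = E.pstate φ X) :
    a ∈ E.stateLoopP φ (E.pstate φ X) := fun _ hY ↦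
  ((E.pstate_append_mono hY.le [a]).antisymm (E.pstate_append_mono hY.ge [a])).trans h

theorem mem_stateLoopP_of_le (hba : E.le [b] [a]) (ha : a ∈ E.stateLoopP φ (E.pstate φ X)) :
    b ∈ E.stateLoopP φ (E.pstate φ X) := by
  have hle := (E.pstate_mono (E.append_le_append (E.le_refl X) hba)).trans_eq (ha X rfl)
  exact E.mem_stateLoopP_of_pstate_eq (hle.antisymm (E.pstate_le_pstate_append X [b]))

theorem getElem_mem_stateLoopP {i : ℕ} (hi : i < X.length)
    (h : E.pstate φ (X.take i) = E.pstate φ (X.take (i + 1))) :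
    X[i] ∈ E.stateLoopP φ (E.pstate φ (X.take i)) :=
  E.mem_stateLoopP_of_pstate_eq (by rw [← List.take_succ_eq_append_getElem hi, h])

theorem pstate_append_of_forall_mem_stateLoopP {Z : List A}
    (hZ : ∀ a ∈ Z, a ∈ E.stateLoopP φ (E.pstate φ X)) :
    E.pstate φ (X ++ Z) = E.pstate φ X := by
  induction Z using List.reverseRecOn with
  | nil => rw [List.append_nil]
  | append_singleton Z a ih =>
    rw [← List.append_assoc]
    exact hZ a (by simp) _ (ih fun b hb ↦ hZ b (List.mem_append_left _ hb))

theorem exists_subset_stateLoopP (S : Set A) :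
    ∃ U, (∀ a ∈ U, a ∈ S) ∧ S ⊆ E.stateLoopP φ (E.pstate φ U) := by
  have hfin : (E.pstate φ '' {U | ∀ a ∈ U, a ∈ S}).Finite :=
    E.finite_range_pstate.subset (Set.image_subset_range _ _)
  obtain ⟨_, ⟨U, hU, rfl⟩, hmax⟩ := hfin.exists_maximal ⟨_, [], by simp, rfl⟩
  refine ⟨U, hU, fun a ha ↦ E.mem_stateLoopP_of_pstate_eq ?_⟩
  have hUa : ∀ b ∈ U ++ [a], b ∈ S := by
    simpa [or_imp, forall_and] using ⟨hU, ha⟩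
  exact (hmax ⟨_, hUa, rfl⟩ (E.pstate_le_pstate_append U [a])).antisymm
    (E.pstate_le_pstate_append U [a])

end PrefixStates

section SuffixStates

variable {φ} {X Y : List A} {a b : A}

theorem le_sstate_iff {i : Fin f} {k : ℕ} :
    k ≤ E.sstate φ X i ↔
      k ≤ (φ i).length ∧ E.le ((φ i).drop ((φ i).length - k)) X :=
  le_sSup_iff_mem_of_isLowerSet
    (s := {k | k ≤ (φ i).length ∧ E.le ((φ i).drop ((φ i).length - k)) X})
    (fun _ _ hle hk ↦ ⟨hle.trans hk.1, E.le_trans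
      (E.le_of_isInfix (List.drop_suffix_drop_left _ (Nat.sub_le_sub_left hle _)).isInfix) hk.2⟩)
    ⟨0, Nat.zero_le _, by simpa using E.nil_le X⟩ ⟨(φ i).length, fun _ hk ↦ hk.1⟩

theorem finite_range_sstate : (Set.range (E.sstate φ)).Finite := by
  refine (Set.finite_Iic fun i ↦ (φ i).length).subset ?_
  rintro _ ⟨X, rfl⟩ i
  exact (E.le_sstate_iff.1 le_rfl).1

theorem mem_Cset_iff_sstate_lt : X ∈ E.Cset φ ↔ ∀ i, E.sstate φ X i < (φ i).length := by
  simp only [Cset, Set.mem_ofPred_eq, ← not_le, le_sstate_iff, le_rfl, true_and,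
    Nat.sub_self, List.drop_zero]

theorem sstate_mono (h : E.le X Y) : E.sstate φ X ≤ E.sstate φ Y := fun _ ↦
  have hX := E.le_sstate_iff.1 le_rfl
  E.le_sstate_iff.2 ⟨hX.1, E.le_trans hX.2 h⟩

theorem antitone_sstate_drop (U : List A) : Antitone fun i ↦ E.sstate φ (U.drop i) :=
  fun _ _ h ↦ E.sstate_mono (E.le_of_isInfix (List.drop_suffix_drop_left U h).isInfix)

theorem sstate_append_mono (h : E.sstate φ X ≤ E.sstate φ Y) (Z : List A) :
    E.sstate φ (Z ++ X) ≤ E.sstate φ (Z ++ Y) := by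
  intro i
  obtain ⟨hlen, hle⟩ := E.le_sstate_iff.1 (le_rfl (a := E.sstate φ (Z ++ X) i))
  obtain ⟨T, U, hTU, hT, hU⟩ := E.exists_append_of_le_append hle
  have hUφ : U <:+ φ i := (hTU ▸ List.suffix_append T U).trans (List.drop_suffix _ _)
  have hUY : E.le U Y := by
    rw [List.suffix_iff_eq_drop.1 hUφ] at hU ⊢
    exact (E.le_sstate_iff.1 ((E.le_sstate_iff.2 ⟨hUφ.length_le, hU⟩).trans (h i))).2
  exact E.le_sstate_iff.2 ⟨hlen, hTU ▸ E.append_le_append hT hUY⟩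

theorem mem_stateLoopS_of_sstate_eq (h : E.sstate φ (a :: X) = E.sstate φ X) :
    a ∈ E.stateLoopS φ (E.sstate φ X) := fun _ hY ↦
  ((E.sstate_append_mono hY.le [a]).antisymm (E.sstate_append_mono hY.ge [a])).trans h

theorem mem_stateLoopS_of_le (hba : E.le [b] [a]) (ha : a ∈ E.stateLoopS φ (E.sstate φ X)) :
    b ∈ E.stateLoopS φ (E.sstate φ X) := by
  have hle := (E.sstate_mono (E.append_le_append hba (E.le_refl X))).trans_eq (ha X rfl)
  exact E.mem_stateLoopS_of_sstate_eq
    (hle.antisymm (E.sstate_mono (E.le_of_isInfix (List.suffix_cons b X).isInfix)))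

theorem getElem_mem_stateLoopS {i : ℕ} (hi : i < X.length)
    (h : E.sstate φ (X.drop i) = E.sstate φ (X.drop (i + 1))) :
    X[i] ∈ E.stateLoopS φ (E.sstate φ (X.drop (i + 1))) :=
  E.mem_stateLoopS_of_sstate_eq (by rw [← List.drop_eq_getElem_cons hi, h])

theorem sstate_append_of_forall_mem_stateLoopS {Z : List A}
    (hZ : ∀ a ∈ Z, a ∈ E.stateLoopS φ (E.sstate φ X)) :
    E.sstate φ (Z ++ X) = E.sstate φ X := by
  induction Z with
  | nil => rfl
  | cons a Z ih => exact hZ a (by simp) _ (ih fun b hb ↦ hZ b (List.mem_cons_of_mem a hb))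

end SuffixStates

section PolynomialClasses

variable {φ} {X : List A} {S : Set A} {one a : A}

theorem growthOf_le_gammaC (hX : X ∈ E.Cset φ) :
    growthOf w (E.stateLoopP φ (E.pstate φ X)) ≤ E.gammaC φ := by
  refine le_csSup (Set.Finite.bddAbove ?_) ⟨X, hX, rfl⟩
  refine ((E.finite_range_pstate (φ := φ)).image
    fun p ↦ growthOf w (E.stateLoopP φ p)).subset ?_
  rintro _ ⟨Y, _, rfl⟩
  exact Set.mem_image_of_mem _ (Set.mem_range_self Y)

variable [Finite A]

theorem subsingleton_stateLoopP (hpoly : E.gammaC φ = 1) (hX : X ∈ E.Cset φ) :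
    (E.stateLoopP φ (E.pstate φ X)).Subsingleton := by
  by_contra hS
  have hgrowth := one_lt_growthOf (fun a _ ↦ E.weight_pos a) (Set.not_subsingleton_iff.1 hS)
  exact absurd hgrowth ((E.growthOf_le_gammaC hX).trans_eq hpoly).not_gt

theorem subsingleton_of_forall_mem_Cset (hpoly : E.gammaC φ = 1)
    (hS : ∀ U : List A, (∀ a ∈ U, a ∈ S) → U ∈ E.Cset φ) : S.Subsingleton := by
  obtain ⟨U, hU, hSU⟩ := E.exists_subset_stateLoopP (φ := φ) S
  exact (E.subsingleton_stateLoopP hpoly (hS U hU)).anti hSU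

theorem subsingleton_stateLoopS (hpoly : E.gammaC φ = 1) (hX : X ∈ E.Cset φ) :
    (E.stateLoopS φ (E.sstate φ X)).Subsingleton := by
  refine E.subsingleton_of_forall_mem_Cset hpoly fun U hU ↦ ?_
  have hUX : U ++ X ∈ E.Cset φ := by
    rw [mem_Cset_iff_sstate_lt, E.sstate_append_of_forall_mem_stateLoopS hU]
    exact E.mem_Cset_iff_sstate_lt.1 hX
  exact E.mem_Cset_of_le hUX (E.le_of_isInfix (List.prefix_append U X).isInfix)

theorem stateLoopP_eq_singleton (hone_le : ∀ a, E.le [one] [a]) (hpoly : E.gammaC φ = 1)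
    (hX : X ∈ E.Cset φ) (ha : a ∈ E.stateLoopP φ (E.pstate φ X)) :
    E.stateLoopP φ (E.pstate φ X) = {one} :=
  (E.subsingleton_stateLoopP hpoly hX).eq_singleton_of_mem
    (E.mem_stateLoopP_of_le (hone_le a) ha)

theorem stateLoopS_eq_singleton (hone_le : ∀ a, E.le [one] [a]) (hpoly : E.gammaC φ = 1)
    (hX : X ∈ E.Cset φ) (ha : a ∈ E.stateLoopS φ (E.sstate φ X)) :
    E.stateLoopS φ (E.sstate φ X) = {one} :=
  (E.subsingleton_stateLoopS hpoly hX).eq_singleton_of_mem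
    (E.mem_stateLoopS_of_le (hone_le a) ha)

end PolynomialClasses

section Readings

variable {φ} {S : Type*}

/-- The behaviour, in a polynomial class, of the prefix and of the suffix states of a word `U`:
`σ i` is the state at the gap before the letter `U[i]`, which is a loop symbol if and only if
`σ i = σ (i + 1)`. Every loop symbol is the letter `one`, loop blocks are dominant, and the state
does not change along a run of letters `one` whose two ends are loop symbols. Stating these
properties abstractly makes the main argument independent of the direction of reading. -/
structure IsUnaryReading (one : A) (D : S → Prop) (U : List A) (σ : ℕ → S) : Prop where
  ordConnected : ∀ s, (σ ⁻¹' {s}).OrdConnected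
  getElem?_of_loop : ∀ {i}, i < U.length → σ i = σ (i + 1) → U[i]? = some one
  dominant_of_loop : ∀ {i}, i < U.length → σ i = σ (i + 1) → D (σ i)
  eq_of_run : ∀ {x y}, x ≤ y → y < U.length → σ x = σ (x + 1) → σ y = σ (y + 1) →
    (∀ i, x ≤ i → i ≤ y → U[i]? = some one) → σ x = σ y

theorem eq_of_mem_take_drop {one : A} {U : List A} {x y : ℕ}
    (hrun : ∀ i, x ≤ i → i ≤ y → U[i]? = some one) :
    ∀ a ∈ (U.drop x).take (y - x), a = one := by
  intro a ha
  obtain ⟨k, hk, rfl⟩ := List.mem_iff_getElem.1 ha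
  rw [List.length_take] at hk
  have := hrun (x + k) (Nat.le_add_right x k) (by omega)
  rw [← Option.some_inj, ← this, ← List.getElem?_eq_getElem, List.getElem?_take_of_lt (by omega),
    List.getElem?_drop]

theorem isUnaryReading_pstate_take [Finite A] {one : A} (hone_le : ∀ a, E.le [one] [a])
    (hpoly : E.gammaC φ = 1) {U : List A} (hU : U ∈ E.Cset φ) :
    IsUnaryReading one (fun p ↦ growthOf w (E.stateLoopP φ p) = E.gammaC φ) U
      fun i ↦ E.pstate φ (U.take i) := by
  have loop_eq {i : ℕ} (hi : i < U.length)
      (h : E.pstate φ (U.take i) = E.pstate φ (U.take (i + 1))) :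
      U[i] = one ∧ E.stateLoopP φ (E.pstate φ (U.take i)) = {one} := by
    have hmem := E.getElem_mem_stateLoopP hi h
    have hC := E.mem_Cset_of_le hU (E.le_of_isInfix (List.take_prefix i U).isInfix)
    have hsing := E.stateLoopP_eq_singleton hone_le hpoly hC hmem
    exact ⟨by simpa [hsing] using hmem, hsing⟩
  refine ⟨fun s ↦ Set.ordConnected_singleton.preimage_mono (E.monotone_pstate_take U),
    fun hi h ↦ by rw [List.getElem?_eq_getElem hi, (loop_eq hi h).1], fun hi h ↦ ?_, ?_⟩
  · rw [(loop_eq hi h).2, hpoly, growthOf_singleton (E.weight_pos one)]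
  · intro x y hxy hy hx _ hrun
    have hones := eq_of_mem_take_drop hrun
    rw [← Nat.add_sub_cancel' hxy, List.take_add, pstate_append_of_forall_mem_stateLoopP]
    rw [(loop_eq (hxy.trans_lt hy) hx).2]
    exact hones

theorem isUnaryReading_sstate_drop [Finite A] {one : A} (hone_le : ∀ a, E.le [one] [a])
    (hpoly : E.gammaC φ = 1) {U : List A} (hU : U ∈ E.Cset φ) :
    IsUnaryReading one (fun s ↦ growthOf w (E.stateLoopS φ s) = E.gammaC φ) U
      fun i ↦ E.sstate φ (U.drop i) := by
  have loop_eq {i : ℕ} (hi : i < U.length)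
      (h : E.sstate φ (U.drop i) = E.sstate φ (U.drop (i + 1))) :
      U[i] = one ∧ E.stateLoopS φ (E.sstate φ (U.drop i)) = {one} := by
    have hmem := E.getElem_mem_stateLoopS hi h
    have hC := E.mem_Cset_of_le hU (E.le_of_isInfix (List.drop_suffix (i + 1) U).isInfix)
    have hsing := E.stateLoopS_eq_singleton hone_le hpoly hC hmem
    exact ⟨by simpa [hsing] using hmem, h ▸ hsing⟩
  refine ⟨fun s ↦ Set.ordConnected_singleton.preimage_anti (E.antitone_sstate_drop U),
    fun hi h ↦ by rw [List.getElem?_eq_getElem hi, (loop_eq hi h).1], fun hi h ↦ ?_, ?_⟩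
  · rw [(loop_eq hi h).2, hpoly, growthOf_singleton (E.weight_pos one)]
  · intro x y hxy hy _ hy' hrun
    have hones := eq_of_mem_take_drop hrun
    have hdrop : (U.drop x).take (y - x) ++ U.drop y = U.drop x := by
      simpa [Nat.add_sub_cancel' hxy] using List.take_append_drop (y - x) (U.drop x)
    rw [← hdrop, sstate_append_of_forall_mem_stateLoopS]
    rw [(loop_eq hy hy').2]
    exact hones

end Readings

section Factorizations

variable {Ws : List (List A)} {W V : List A} {q q' r r' K : ℕ} {one : A}

/-- `Ws` cuts `W` into one factor for each letter of `V`, each contained in the letter it is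
assigned to: the data of an embedding of `W` into `V`, see `EmbeddingOrder.le_iff_factor`. -/
def IsFactorization (Ws : List (List A)) (W V : List A) : Prop :=
  Ws.length = V.length ∧ Ws.flatten = W ∧ ∀ x ∈ Ws.zip V, E.le x.1 [x.2]

theorem monotone_length_flatten_take (Ws : List (List A)) :
    Monotone fun r ↦ (Ws.take r).flatten.length :=
  fun _ _ h ↦ (List.take_prefix_take_left h).flatten.length_le

theorem flatten_take_succ (hr : r < Ws.length) :
    (Ws.take (r + 1)).flatten = (Ws.take r).flatten ++ Ws[r] := by
  rw [List.take_succ_eq_append_getElem hr, List.flatten_append, List.flatten_singleton]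

theorem MapsTo.le_of_le (h : MapsTo Ws q r) (h' : MapsTo Ws q' r') (hq : q ≤ q') : r ≤ r' := by
  by_contra! hlt
  exact absurd ((monotone_length_flatten_take Ws hlt).trans (h.1.trans hq)) h'.2.not_ge

theorem MapsTo.lt_length (h : MapsTo Ws q r) : r < Ws.length := by
  by_contra! hr
  have hlt := h.1.trans_lt h.2
  rw [List.take_of_length_le hr, List.take_of_length_le (Nat.le_succ_of_le hr)] at hlt
  exact lt_irrefl _ hlt

theorem MapsTo.lt_length_flatten (h : MapsTo Ws q r) : q < Ws.flatten.length :=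
  h.2.trans_le (List.take_prefix (r + 1) Ws).flatten.length_le

theorem exists_mapsTo (hq : q < Ws.flatten.length) : ∃ r, MapsTo Ws q r := by
  have hex : ∃ r, q < (Ws.take r).flatten.length := ⟨Ws.length, by rwa [List.take_length]⟩
  obtain ⟨r, hr⟩ : ∃ r, Nat.find hex = r + 1 := by
    refine Nat.exists_eq_succ_of_ne_zero fun h ↦ ?_
    simpa using (Nat.find_eq_zero hex).1 h
  exact ⟨r, not_lt.1 (Nat.find_min hex (hr ▸ Nat.lt_succ_self r)), hr ▸ Nat.find_spec hex⟩

theorem MapsTo.exists_mem_getElem (h : MapsTo Ws q r) :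
    ∃ a ∈ Ws[r]'h.lt_length, Ws.flatten[q]? = some a := by
  have hprefix := flatten_take_succ h.lt_length ▸ (List.take_prefix (r + 1) Ws).flatten
  have hq : q < ((Ws.take r).flatten ++ Ws[r]'h.lt_length).length :=
    flatten_take_succ h.lt_length ▸ h.2
  rw [List.prefix_iff_getElem?.1 hprefix q hq, List.getElem_append_right h.1]
  exact ⟨_, List.getElem_mem _, rfl⟩

variable {E}

theorem IsFactorization.le_getElem (h : E.IsFactorization Ws W V) (hr : r < Ws.length) :
    E.le Ws[r] [V[r]'(h.1 ▸ hr)] := by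
  have hr' : r < (Ws.zip V).length := by simp [← h.1, hr]
  simpa using h.2.2 _ (List.getElem_mem hr')

theorem IsFactorization.getElem?_eq_of_mapsTo (h : E.IsFactorization Ws W V)
    (hone_le : ∀ a, E.le [one] [a]) (hqr : MapsTo Ws q r) (hV : V[r]? = some one) :
    W[q]? = some one := by
  obtain ⟨a, ha, hWq⟩ := hqr.exists_mem_getElem
  have hVr : V[r]'(h.1 ▸ hqr.lt_length) = one := by
    rwa [List.getElem?_eq_getElem (h.1 ▸ hqr.lt_length), Option.some_inj] at hV
  have hle : E.le [a] [one] :=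
    E.le_trans (E.le_of_isInfix ((List.singleton_infix_iff _ _).2 ha))
      (hVr ▸ h.le_getElem hqr.lt_length)
  rw [← h.2.1, hWq, List.singleton_inj.1 (E.le_antisymm hle (hone_le a))]

theorem IsFactorization.card_le_of_forall_mapsTo (h : E.IsFactorization Ws W V)
    (hK : ∀ a, w a ≤ K) {B : Finset ℕ} (hB : ∀ q ∈ B, MapsTo Ws q r) : B.card ≤ K := by
  rcases B.eq_empty_or_nonempty with rfl | ⟨q, hq⟩
  · exact Nat.zero_le K
  have hr := (hB q hq).lt_length
  calc B.card
      ≤ (Finset.Ico (Ws.take r).flatten.length (Ws.take (r + 1)).flatten.length).card :=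
        Finset.card_le_card fun q hq ↦ Finset.mem_Ico.2 (hB q hq)
    _ = Ws[r].length := by rw [Nat.card_Ico, flatten_take_succ hr, List.length_append,
        Nat.add_sub_cancel_left]
    _ ≤ wt w Ws[r] := E.length_le_wt _
    _ ≤ wt w [V[r]'(h.1 ▸ hr)] := E.wt_mono (h.le_getElem hr)
    _ ≤ K := by simpa [wt] using hK _

end Factorizations

section LoopPairs

variable {E} {S : Type*} {D : S → Prop} {σ τ : ℕ → S} {one : A} {Ws : List (List A)}
  {W V : List A} {K : ℕ}

/-- The pairs formed by a loop position of `W` and the loop position of `V` to which the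
factorization `Ws` maps it, where `σ` and `τ` are the sequences of states of `W` and `V`. -/
def loopPairs (Ws : List (List A)) (σ τ : ℕ → S) : Set (ℕ × ℕ) :=
  {z | MapsTo Ws z.1 z.2 ∧ σ z.1 = σ (z.1 + 1) ∧ τ z.2 = τ (z.2 + 1)}

theorem IsFactorization.finite_loopPairs (hWs : E.IsFactorization Ws W V) (σ τ : ℕ → S) :
    (loopPairs Ws σ τ).Finite :=
  ((Set.finite_Iio W.length).prod (Set.finite_Iio V.length)).subset fun _ hz ↦
    ⟨hWs.2.1 ▸ hz.1.lt_length_flatten, hWs.1 ▸ hz.1.lt_length⟩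

theorem IsFactorization.exists_mapsTo_loop (hWs : E.IsFactorization Ws W V) (hK : ∀ a, w a ≤ K)
    {B : Set ℕ} (hB : ∀ i ∈ B, i < W.length)
    (hcard : K * (transitions τ V.length).card < B.ncard) :
    ∃ i ∈ B, ∃ r, MapsTo Ws i r ∧ τ r = τ (r + 1) := by
  by_contra! hne
  obtain ⟨B, rfl⟩ := ((Set.finite_Iio W.length).subset hB).exists_finset_coe
  have hex : ∀ i ∈ B, ∃ r, MapsTo Ws i r := fun i hi ↦ exists_mapsTo (hWs.2.1 ▸ hB i hi)
  choose! μ hμ using hex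
  have hmaps : ∀ i ∈ B, μ i ∈ transitions τ V.length := fun i hi ↦
    Finset.mem_filter.2 ⟨Finset.mem_range.2 (hWs.1 ▸ (hμ i hi).lt_length), hne i hi _ (hμ i hi)⟩
  rw [Set.ncard_coe_finset, mul_comm] at hcard
  obtain ⟨r, _, hr⟩ := Finset.exists_lt_card_fiber_of_mul_lt_card_of_maps_to hmaps hcard
  refine hr.not_ge (hWs.card_le_of_forall_mapsTo (r := r) hK fun i hi ↦ ?_)
  obtain ⟨hiB, rfl⟩ := Finset.mem_filter.1 hi
  exact hμ i hiB

/-- The letters between two letters of `W` landing in the same loop block of `V` land in that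
block too, hence equal `one`, so that `W` does not change state between them. -/
theorem IsFactorization.state_eq_of_loopPairs (hWs : E.IsFactorization Ws W V)
    (hone_le : ∀ a, E.le [one] [a]) (hσ : IsUnaryReading one D W σ)
    (hτ : IsUnaryReading one D V τ) :
    ∀ z ∈ loopPairs Ws σ τ, ∀ z' ∈ loopPairs Ws σ τ, τ z.2 = τ z'.2 → σ z.1 = σ z'.1 := by
  intro z hz z' hz' hzz'
  wlog hle : z.1 ≤ z'.1 generalizing z z'
  · exact (this z' hz' z hz hzz'.symm (le_of_not_ge hle)).symm
  have hlen : z'.1 < Ws.flatten.length := hz'.1.lt_length_flatten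
  refine hσ.eq_of_run hle (hWs.2.1 ▸ hlen) hz.2.1 hz'.2.1 fun i hi hi' ↦ ?_
  obtain ⟨r, hr⟩ := exists_mapsTo (hi'.trans_lt hlen)
  have hloop : τ r = τ (r + 1) := by
    rcases (hr.le_of_le hz'.1 hi').lt_or_eq with hlt | rfl
    · exact loop_of_mem_Ico hτ.ordConnected (hz.1.le_of_le hr hi) hlt hzz'
    · exact hz'.2.2
  exact hWs.getElem?_eq_of_mapsTo hone_le hr (hτ.getElem?_of_loop (hWs.1 ▸ hr.lt_length) hloop)

theorem IsFactorization.dominantStates_subset_image (hWs : E.IsFactorization Ws W V)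
    (hK : ∀ a, w a ≤ K)
    (hlarge : LargeBlocks D σ W.length (K * (transitions τ V.length).card)) :
    dominantStates D σ W.length ⊆ (fun z ↦ σ z.1) '' loopPairs Ws σ τ := by
  intro p hp
  obtain ⟨i, ⟨_, rfl, hi⟩, r, hir, hr⟩ :=
    hWs.exists_mapsTo_loop hK (fun _ hi ↦ hi.1) (hlarge p hp)
  exact ⟨(i, r), ⟨hir, hi.symm, hr⟩, rfl⟩

theorem IsFactorization.image_subset_dominantStates (hWs : E.IsFactorization Ws W V)
    (hτ : IsUnaryReading one D V τ) :
    (fun z ↦ τ z.2) '' loopPairs Ws σ τ ⊆ dominantStates D τ V.length := by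
  rintro _ ⟨z, hz, rfl⟩
  have hr : z.2 < V.length := hWs.1 ▸ hz.1.lt_length
  exact ⟨⟨z.2, hr.le, rfl⟩, hτ.dominant_of_loop hr hz.2.2⟩

theorem IsFactorization.ncard_dominantStates_le (hWs : E.IsFactorization Ws W V)
    (hone_le : ∀ a, E.le [one] [a]) (hK : ∀ a, w a ≤ K) (hσ : IsUnaryReading one D W σ)
    (hτ : IsUnaryReading one D V τ)
    (hlarge : LargeBlocks D σ W.length (K * (transitions τ V.length).card)) :
    (dominantStates D σ W.length).ncard ≤ (dominantStates D τ V.length).ncard :=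
  have hfin := hWs.finite_loopPairs σ τ
  calc (dominantStates D σ W.length).ncard
      ≤ ((fun z ↦ σ z.1) '' loopPairs Ws σ τ).ncard :=
        Set.ncard_le_ncard (hWs.dominantStates_subset_image hK hlarge) (hfin.image _)
    _ ≤ ((fun z ↦ τ z.2) '' loopPairs Ws σ τ).ncard :=
        ncard_image_le_of_determines hfin (hWs.state_eq_of_loopPairs hone_le hσ hτ)
    _ ≤ (dominantStates D τ V.length).ncard :=
        Set.ncard_le_ncard (hWs.image_subset_dominantStates hτ) (finite_dominantStates D τ _)

theorem IsFactorization.state_eq_of_ncard_dominantStates_le (hWs : E.IsFactorization Ws W V)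
    (hone_le : ∀ a, E.le [one] [a]) (hK : ∀ a, w a ≤ K) (hσ : IsUnaryReading one D W σ)
    (hτ : IsUnaryReading one D V τ)
    (hlarge : LargeBlocks D σ W.length (K * (transitions τ V.length).card))
    (hle : (dominantStates D τ V.length).ncard ≤ (dominantStates D σ W.length).ncard)
    {z z' : ℕ × ℕ} (hz : z ∈ loopPairs Ws σ τ) (hz' : z' ∈ loopPairs Ws σ τ)
    (hzz' : σ z.1 = σ z'.1) : τ z.2 = τ z'.2 :=
  have hfin := hWs.finite_loopPairs σ τ
  have hle' := calc ((fun z ↦ τ z.2) '' loopPairs Ws σ τ).ncard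
      ≤ (dominantStates D τ V.length).ncard :=
        Set.ncard_le_ncard (hWs.image_subset_dominantStates hτ) (finite_dominantStates D τ _)
    _ ≤ (dominantStates D σ W.length).ncard := hle
    _ ≤ ((fun z ↦ σ z.1) '' loopPairs Ws σ τ).ncard :=
        Set.ncard_le_ncard (hWs.dominantStates_subset_image hK hlarge) (hfin.image _)
  determines_of_ncard_image_le hfin (hWs.state_eq_of_loopPairs hone_le hσ hτ) hle' hz hz' hzz'

theorem IsFactorization.loop_of_central (hWs : E.IsFactorization Ws W V)
    (hone_le : ∀ a, E.le [one] [a]) (hK : ∀ a, w a ≤ K) (hσ : IsUnaryReading one D W σ)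
    (hτ : IsUnaryReading one D V τ)
    (hlarge : LargeBlocks D σ W.length (K * (transitions τ V.length).card))
    (hle : (dominantStates D τ V.length).ncard ≤ (dominantStates D σ W.length).ncard)
    {p : S} {q r : ℕ} (hq : q < W.length) (hqr : MapsTo Ws q r)
    (hbefore : K * (transitions τ V.length).card <
      {i | i < q ∧ σ i = p ∧ σ (i + 1) = p}.ncard)
    (hafter : K * (transitions τ V.length).card <
      {i | q < i ∧ i < W.length ∧ σ i = p ∧ σ (i + 1) = p}.ncard) :
    τ r = τ (r + 1) := by
  obtain ⟨x, ⟨hxq, rfl, hx⟩, s, hxs, hs⟩ :=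
    hWs.exists_mapsTo_loop hK (fun i hi ↦ hi.1.trans hq) hbefore
  obtain ⟨y, ⟨hqy, _, hyx, hy⟩, t, hyt, ht⟩ :=
    hWs.exists_mapsTo_loop hK (fun i hi ↦ hi.2.1) hafter
  have hst : τ s = τ t :=
    hWs.state_eq_of_ncard_dominantStates_le hone_le hK hσ hτ hlarge hle
      (z := (x, s)) (z' := (y, t)) ⟨hxs, hx.symm, hs⟩ ⟨hyt, hyx.trans hy.symm, ht⟩ hyx.symm
  rcases (hqr.le_of_le hyt hqy.le).lt_or_eq with hrt | rfl
  · exact loop_of_mem_Ico hτ.ordConnected (hxs.le_of_le hqr hxq.le) hrt hst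
  · exact ht

end LoopPairs

section Main

variable {φ} {one : A} {K Q : ℕ} {W V : List A}

theorem card_transitions_pstate_take_lt (hV : V ∈ E.Cset φ) (m : ℕ) :
    (transitions (fun i ↦ E.pstate φ (V.take i)) m).card < E.Pcard φ :=
  card_transitions_lt_ncard
    (fun _ ↦ Set.ordConnected_singleton.preimage_mono (E.monotone_pstate_take V))
    (P := {p | ∃ X ∈ E.Cset φ, E.pstate φ X = p})
    (E.finite_range_pstate.subset fun _ ⟨X, _, hX⟩ ↦ ⟨X, hX⟩)
    (fun i ↦ ⟨V.take i, E.mem_Cset_of_le hV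
      (E.le_of_isInfix (List.take_prefix i V).isInfix), rfl⟩) m

theorem card_transitions_sstate_drop_lt (hV : V ∈ E.Cset φ) (m : ℕ) :
    (transitions (fun i ↦ E.sstate φ (V.drop i)) m).card < E.Scard φ :=
  card_transitions_lt_ncard
    (fun _ ↦ Set.ordConnected_singleton.preimage_anti (E.antitone_sstate_drop V))
    (P := {s | ∃ X ∈ E.Cset φ, E.sstate φ X = s})
    (E.finite_range_sstate.subset fun _ ⟨X, _, hX⟩ ↦ ⟨X, hX⟩)
    (fun i ↦ ⟨V.drop i, E.mem_Cset_of_le hV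
      (E.le_of_isInfix (List.drop_suffix i V).isInfix), rfl⟩) m

variable {E}

theorem AllDomLargeP.largeBlocks (h : E.AllDomLargeP φ K Q W) {N : ℕ} (hN : N ≤ 2 * K * Q) :
    LargeBlocks (fun p ↦ growthOf w (E.stateLoopP φ p) = E.gammaC φ)
      (fun i ↦ E.pstate φ (W.take i)) W.length N :=
  fun p hp ↦ (Nat.lt_succ_of_le hN).trans_le (h p hp.1 hp.2)

theorem AllDomLargeS.largeBlocks (h : E.AllDomLargeS φ K Q W) {N : ℕ} (hN : N ≤ 2 * K * Q) :
    LargeBlocks (fun s ↦ growthOf w (E.stateLoopS φ s) = E.gammaC φ)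
      (fun i ↦ E.sstate φ (W.drop i)) W.length N :=
  fun s hs ↦ ((Nat.lt_succ_of_le hN).trans_le (h s hs.1 hs.2)).trans_eq
    (congrArg Set.ncard (Set.ext fun _ ↦ and_congr_right' and_comm))

variable (E) [Finite A]

theorem prefix_dominant_blocks_embed (hone_le : ∀ a, E.le [one] [a]) (hpoly : E.gammaC φ = 1)
    (hK : ∀ a, w a ≤ K) (hQ : E.Pcard φ ≤ Q) (hV : V ∈ E.Cset φ) (hWV : E.le W V)
    (hlarge : E.AllDomLargeP φ K Q W) :
    E.domCountP φ W ≤ E.domCountP φ V ∧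
      (E.domCountP φ V = E.domCountP φ W → ∀ Ws, E.IsFactorization Ws W V →
        ∀ q r, E.CentralP φ (K * Q) W q → MapsTo Ws q r →
          E.pstate φ (V.take (r + 1)) = E.pstate φ (V.take r)) := by
  have hKpos : 0 < K := (E.weight_pos one).trans_le (hK one)
  have hσ := E.isUnaryReading_pstate_take hone_le hpoly (E.mem_Cset_of_le hV hWV)
  have hτ := E.isUnaryReading_pstate_take hone_le hpoly hV
  have hcard := (Nat.mul_lt_mul_left hKpos).2
    ((E.card_transitions_pstate_take_lt hV V.length).trans_le hQ)
  have hblocks := hlarge.largeBlocks (hcard.le.trans (by lia))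
  refine ⟨?_, fun heq Ws hWs q r ⟨hq, _, hbefore, hafter⟩ hqr ↦ ?_⟩
  · obtain ⟨Ws, hWs⟩ := (E.le_iff_factor W V).1 hWV
    exact IsFactorization.ncard_dominantStates_le hWs hone_le hK hσ hτ hblocks
  · exact (hWs.loop_of_central hone_le hK hσ hτ hblocks heq.le hq hqr
      (hcard.trans_le hbefore) (hcard.trans_le hafter)).symm

theorem suffix_dominant_blocks_embed (hone_le : ∀ a, E.le [one] [a]) (hpoly : E.gammaC φ = 1)
    (hK : ∀ a, w a ≤ K) (hQ : E.Scard φ ≤ Q) (hV : V ∈ E.Cset φ) (hWV : E.le W V)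
    (hlarge : E.AllDomLargeS φ K Q W) :
    E.domCountS φ W ≤ E.domCountS φ V ∧
      (E.domCountS φ V = E.domCountS φ W → ∀ Ws, E.IsFactorization Ws W V →
        ∀ q r, E.CentralS φ (K * Q) W q → MapsTo Ws q r →
          E.sstate φ (V.drop r) = E.sstate φ (V.drop (r + 1))) := by
  have hKpos : 0 < K := (E.weight_pos one).trans_le (hK one)
  have hσ := E.isUnaryReading_sstate_drop hone_le hpoly (E.mem_Cset_of_le hV hWV)
  have hτ := E.isUnaryReading_sstate_drop hone_le hpoly hV
  have hcard := (Nat.mul_lt_mul_left hKpos).2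
    ((E.card_transitions_sstate_drop_lt hV V.length).trans_le hQ)
  have hblocks := hlarge.largeBlocks (hcard.le.trans (by lia))
  refine ⟨?_, fun heq Ws hWs q r ⟨hq, _, hbefore, hafter⟩ hqr ↦ ?_⟩
  · obtain ⟨Ws, hWs⟩ := (E.le_iff_factor W V).1 hWV
    exact IsFactorization.ncard_dominantStates_le hWs hone_le hK hσ hτ hblocks
  · exact hWs.loop_of_central hone_le hK hσ hτ hblocks heq.le hq hqr
      (hcard.trans_le hbefore) (hcard.trans_le hafter)

end Main

theorem Pcard_le_Qconst : E.Pcard φ ≤ E.Qconst φ := by unfold Qconst; lia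

theorem Scard_le_Qconst : E.Scard φ ≤ E.Qconst φ := by unfold Qconst; lia

theorem weight_le_Kmax [Fintype A] (w : A → ℕ) (a : A) : w a ≤ Kmax A w :=
  Finset.le_sup (Finset.mem_univ a)

end EmbeddingOrder

theorem dominant_blocks_embed_general {A : Type*} [Finite A] {w : A → ℕ}
    (E : EmbeddingOrder A w) {f : ℕ} (φ : Fin f → List A) {one : A}
    (hone_le : ∀ a : A, E.le [one] [a]) (hpoly : E.gammaC φ = 1) {K Q : ℕ}
    (hK : ∀ a, w a ≤ K) {W V : List A} (hV : V ∈ E.Cset φ) (hWV : E.le W V) :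
    (E.Pcard φ ≤ Q → E.AllDomLargeP φ K Q W → E.domCountP φ W ≤ E.domCountP φ V ∧
      (E.domCountP φ V = E.domCountP φ W → ∀ Ws, E.IsFactorization Ws W V →
        ∀ q r, E.CentralP φ (K * Q) W q → MapsTo Ws q r →
          E.pstate φ (V.take (r + 1)) = E.pstate φ (V.take r))) ∧
    (E.Scard φ ≤ Q → E.AllDomLargeS φ K Q W → E.domCountS φ W ≤ E.domCountS φ V ∧
      (E.domCountS φ V = E.domCountS φ W → ∀ Ws, E.IsFactorization Ws W V →
        ∀ q r, E.CentralS φ (K * Q) W q → MapsTo Ws q r →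
          E.sstate φ (V.drop r) = E.sstate φ (V.drop (r + 1)))) :=
  ⟨fun hQ ↦ E.prefix_dominant_blocks_embed hone_le hpoly hK hQ hV hWV,
    fun hQ ↦ E.suffix_dominant_blocks_embed hone_le hpoly hK hQ hV hWV⟩

/-- **Lemma `lem-dw`.**  Let `C` be an unbounded polynomial class (`γ = 1`, unbounded
growth).  Let `W ∈ C_n` have `k` dominant loop blocks in its prefix decomposition, all
of them large, and let `Ŵ ∈ C` contain `W`.  Then `Ŵ` has at least `k` dominant loop
blocks in its prefix decomposition; moreover if `Ŵ` has exactly `k` dominant loop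
blocks, then in every embedding of `W` into `Ŵ`, for any dominant loop block of `W`,
all its central symbols are mapped to loop symbols of `Ŵ`.  Analogous properties hold
for suffix decompositions. -/
theorem dominant_blocks_embed {A : Type*} [Fintype A] {w : A → ℕ}
    (E : EmbeddingOrder A w) {f : ℕ} (φ : Fin f → List A)
    (hw : ∀ a, 0 < w a)
    (one : A) (hone : w one = 1) (hone_le : ∀ a : A, E.le [one] [a])
    (hf : 0 < f) (hφne : ∀ i, φ i ≠ [])
    (hφmin : ∀ i ψ, E.le ψ (φ i) → ψ ≠ φ i → ψ ∈ E.Cset φ)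
    (hunb : ¬ ∃ M : ℕ, ∀ n : ℕ,
      Set.ncard {W : List A | W ∈ E.Cset φ ∧ EmbeddingOrder.wt w W = n} ≤ M)
    (hpoly : E.gammaC φ = 1) :
    (∀ (W V : List A) (k : ℕ), W ∈ E.Cset φ → V ∈ E.Cset φ → E.le W V →
      E.domCountP φ W = k → E.AllDomLargeP φ (Kmax A w) (E.Qconst φ) W →
      k ≤ E.domCountP φ V ∧
        (E.domCountP φ V = k →
          ∀ Ws : List (List A), Ws.length = V.length → Ws.flatten = W →
            (∀ x ∈ Ws.zip V, E.le x.1 [x.2]) →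
          ∀ q r : ℕ, E.CentralP φ (Kmax A w * E.Qconst φ) W q →
            growthOf w (E.stateLoopP φ (E.pstate φ (W.take q))) = E.gammaC φ →
            MapsTo Ws q r →
            E.pstate φ (V.take (r + 1)) = E.pstate φ (V.take r))) ∧
    (∀ (W V : List A) (k : ℕ), W ∈ E.Cset φ → V ∈ E.Cset φ → E.le W V →
      E.domCountS φ W = k → E.AllDomLargeS φ (Kmax A w) (E.Qconst φ) W →
      k ≤ E.domCountS φ V ∧
        (E.domCountS φ V = k →
          ∀ Ws : List (List A), Ws.length = V.length → Ws.flatten = W →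
            (∀ x ∈ Ws.zip V, E.le x.1 [x.2]) →
          ∀ q r : ℕ, E.CentralS φ (Kmax A w * E.Qconst φ) W q →
            growthOf w (E.stateLoopS φ (E.sstate φ (W.drop (q + 1)))) = E.gammaC φ →
            MapsTo Ws q r →
            E.sstate φ (V.drop r) = E.sstate φ (V.drop (r + 1)))) := by
  have embed {W V : List A} := dominant_blocks_embed_general E φ hone_le hpoly
    (weight_le_Kmax w) (Q := E.Qconst φ) (W := W) (V := V)
  constructor <;> rintro W V _ - hV hWV rfl hlarge
  · obtain ⟨hle, hloop⟩ := (embed hV hWV).1 (E.Pcard_le_Qconst φ) hlarge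
    exact ⟨hle, fun heq Ws hlen hW hWs q r hq _ ↦ hloop heq Ws ⟨hlen, hW, hWs⟩ q r hq⟩
  · obtain ⟨hle, hloop⟩ := (embed hV hWV).2 (E.Scard_le_Qconst φ) hlarge
    exact ⟨hle, fun heq Ws hlen hW hWs q r hq _ ↦ hloop heq Ws ⟨hlen, hW, hWs⟩ q r hq⟩
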